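/- Let $\mathcal A$ be a finite alphabet with $N\ge 2$ letters and let $\mathcal W$ be the set of finite words over $\mathcal A$, including the empty word $\emptyset$; write $|w|$ for the length of $w$, and $wi$ for $w$ followed by the letter $i$. Let $\sim$ be an equivalence relation on $\mathcal W$ such that $v\sim w$ implies $|v|=|w|$. Let $m:\mathcal A\to(0,1)$ satisfy $\sum_{a\in\mathcal A}m(a)=1$, and put $m(w_1\cdots w_n)=m(w_1)\cdots m(w_n)$, $m(\emptyset)=1$. Define $p(v,w)=m(w)/\sum_{\hat v\sim v}m(\hat v)$ if $w=\hat v i$ for some $\hat v\sim v$ and $i\in\mathcal A$, and $p(v,w)=0$ otherwise; let $p_0(v,w)=\delta_v(w)$ and $p_n(v,w)=\sum_{u\in\mathcal W}p_{n-1}(v,u)\,p(u,w)$ for $n\ge1$. The Green function is $g(v,w)=p_{|w|-|v|}(v,w)$ if $|v|\le|w|$ and $g(v,w)=0$ otherwise, and the Martin kernel is $k(v,w)=g(v,w)/g(\emptyset,w)$. Then for all words $v,w,\tilde w\in\mathcal W$ with $\tilde w\sim w$ and all letters $i,j\in\mathcal A$ such that $v\notin\{wi,\,wj,\,\tilde wi,\,\tilde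 wj\}$, $$k(v,wi)=k(v,wj)=k(v,\tilde wj)=k(v,\tilde wi).$$ -/

import Mathlib

namespace Martin

/-- Finite words over the alphabet `Fin N`; the empty list is the empty word and
`w ++ [i]` is the word `wi`. -/
abbrev Word (N : ℕ) := List (Fin N)

/-- The mass of a word: `m(w₁⋯wₙ) = m(w₁)⋯m(wₙ)`, `m(∅) = 1`. -/
noncomputable def mW {N : ℕ} (m : Fin N → ℝ) (w : Word N) : ℝ := (w.map m).prod

/-- Total mass of the equivalence class of `v`: `Σ_{u ∼ v} m(u)`. The sum is finite whenever
equivalent words have the same length. -/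
noncomputable def massCl {N : ℕ} (sim : Word N → Word N → Prop) (m : Fin N → ℝ)
    (v : Word N) : ℝ :=
  ∑ᶠ u ∈ {u : Word N | sim u v}, mW m u

open Classical in
/-- Transition probability: `p(v,w) = m(w) / Σ_{u ∼ v} m(u)` if `w = v'i` for some
`v' ∼ v` and some letter `i`, and `0` otherwise. -/
noncomputable def pTrans {N : ℕ} (sim : Word N → Word N → Prop) (m : Fin N → ℝ)
    (v w : Word N) : ℝ :=
  if ∃ v' : Word N, ∃ i : Fin N, sim v' v ∧ w = v' ++ [i] then mW m w / massCl sim m v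
  else 0

/-- The `n`-step transition probabilities: `p₀(v,w) = δ_v(w)` and
`pₙ₊₁(v,w) = Σ_u pₙ(v,u) p(u,w)`. Only words `u` equivalent to the parent of `w` contribute,
so the sum is finite whenever equivalent words have the same length. -/
noncomputable def pn {N : ℕ} (sim : Word N → Word N → Prop) (m : Fin N → ℝ) :
    ℕ → Word N → Word N → ℝ
  | 0, v, w => if w = v then 1 else 0
  | n + 1, v, w => ∑ᶠ u : Word N, pn sim m n v u * pTrans sim m u w

/-- The Green function: `g(v,w) = p_{|w|-|v|}(v,w)` if `|v| ≤ |w|`, and `0` otherwise. -/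
noncomputable def green {N : ℕ} (sim : Word N → Word N → Prop) (m : Fin N → ℝ)
    (v w : Word N) : ℝ :=
  if v.length ≤ w.length then pn sim m (w.length - v.length) v w else 0

/-- The Martin kernel `k(v,w) = g(v,w) / g(∅,w)`. -/
noncomputable def mkernel {N : ℕ} (sim : Word N → Word N → Prop) (m : Fin N → ℝ)
    (v w : Word N) : ℝ :=
  green sim m v w / green sim m [] w

end Martin

/-!
The last step into a child `wi` starts in the class of `w`, and from every word of that class it
has the same probability `m(wi) / Σ_{u ∼ w} m(u)`. Hence `g(v,wi)` is `m(wi)` times a factor that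
depends on `w` only through its class, and `m(wi)` cancels in the quotient `g(v,wi) / g(∅,wi)`.
This covers `|v| ≤ |w|`; otherwise `|wi| ≤ |v|`, and `g(v,wi) = 0` because `v ≠ wi`.
-/

namespace Martin

variable {N : ℕ} {sim : Word N → Word N → Prop} {m : Fin N → ℝ}

/-- The average density relative to `m`, on the class of `w`, of the `n`-step distribution from
`v`: `Σ_{u ∼ w} pₙ(v,u) / Σ_{u ∼ w} m(u)`. It is the ratio of `pₙ₊₁(v,wi)` to `m(wi)`. -/
noncomputable def densityCl (sim : Word N → Word N → Prop) (m : Fin N → ℝ) (n : ℕ)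
    (v w : Word N) : ℝ :=
  (∑ᶠ u ∈ {u : Word N | sim u w}, pn sim m n v u) / massCl sim m w

theorem mW_ne_zero (hm : ∀ a, m a ≠ 0) (w : Word N) : mW m w ≠ 0 :=
  List.prod_ne_zero (by simpa [mW] using fun a _ => hm a)

theorem setOf_sim_congr (hsim : Equivalence sim) {w w' : Word N} (h : sim w w') :
    {u | sim u w} = {u | sim u w'} :=
  Set.ext fun _ => ⟨fun hu => hsim.trans hu h, fun hu => hsim.trans hu (hsim.symm h)⟩

theorem massCl_congr (hsim : Equivalence sim) {w w' : Word N} (h : sim w w') :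
    massCl sim m w = massCl sim m w' := by
  rw [massCl, massCl, setOf_sim_congr hsim h]

theorem densityCl_congr (hsim : Equivalence sim) {w w' : Word N} (h : sim w w') (n : ℕ)
    (v : Word N) : densityCl sim m n v w = densityCl sim m n v w' := by
  rw [densityCl, densityCl, setOf_sim_congr hsim h, massCl_congr hsim h]

open Classical in
theorem pTrans_append_singleton (hsim : Equivalence sim) (u w : Word N) (i : Fin N) :
    pTrans sim m u (w ++ [i]) = if sim u w then mW m (w ++ [i]) / massCl sim m w else 0 := by
  have hstep : (∃ v' k, sim v' u ∧ w ++ [i] = v' ++ [k]) ↔ sim u w := by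
    refine ⟨?_, fun h => ⟨w, i, hsim.symm h, rfl⟩⟩
    rintro ⟨v', k, hv', heq⟩
    obtain ⟨rfl, -⟩ := List.append_inj' heq rfl
    exact hsim.symm hv'
  simp only [pTrans, hstep]
  exact ite_congr rfl (fun h => by rw [massCl_congr hsim h]) fun _ => rfl

theorem pn_succ_append_singleton (hsim : Equivalence sim) (n : ℕ) (v w : Word N) (i : Fin N) :
    pn sim m (n + 1) v (w ++ [i]) = mW m (w ++ [i]) * densityCl sim m n v w := by
  classical
  calc pn sim m (n + 1) v (w ++ [i])
      = ∑ᶠ u ∈ {u | sim u w}, pn sim m n v u * (mW m (w ++ [i]) / massCl sim m w) := by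
        simp only [pn, pTrans_append_singleton hsim, mul_ite, mul_zero, finsum_eq_if,
          Set.mem_ofPred_eq]
    _ = (∑ᶠ u ∈ {u | sim u w}, pn sim m n v u) * (mW m (w ++ [i]) / massCl sim m w) :=
        (finsum_mem_mul _ _).symm
    _ = mW m (w ++ [i]) * densityCl sim m n v w := mul_div_left_comm _ _ _

theorem green_append_singleton (hsim : Equivalence sim) {v w : Word N}
    (h : v.length ≤ w.length) (i : Fin N) :
    green sim m v (w ++ [i]) =
      mW m (w ++ [i]) * densityCl sim m (w.length - v.length) v w := by
  rw [green, List.length_append, List.length_singleton, if_pos (h.trans (Nat.le_succ _)),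
    Nat.sub_add_comm h, pn_succ_append_singleton hsim]

theorem green_eq_zero {v w : Word N} (h : w.length ≤ v.length) (hne : v ≠ w) :
    green sim m v w = 0 := by
  rw [green, Nat.sub_eq_zero_of_le h, pn, if_neg hne.symm, ite_self]

theorem mkernel_append_singleton (hsim : Equivalence sim) (hm : ∀ a, m a ≠ 0) {v w : Word N}
    (h : v.length ≤ w.length) (i : Fin N) :
    mkernel sim m v (w ++ [i]) =
      densityCl sim m (w.length - v.length) v w / densityCl sim m w.length [] w := by
  rw [mkernel, green_append_singleton hsim h, green_append_singleton hsim (Nat.zero_le _),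
    mul_div_mul_left _ _ (mW_ne_zero hm _), List.length_nil, Nat.sub_zero]

theorem mkernel_eq_zero {v w : Word N} (h : w.length ≤ v.length) (hne : v ≠ w) :
    mkernel sim m v w = 0 := by
  rw [mkernel, green_eq_zero h hne, zero_div]

end Martin

theorem mkernel_children_general {N : ℕ} {sim : Martin.Word N → Martin.Word N → Prop}
    (hsim : Equivalence sim) (hlen : ∀ v w : Martin.Word N, sim v w → v.length = w.length)
    {m : Fin N → ℝ} (hm : ∀ a, m a ≠ 0) {v w w' : Martin.Word N} (hw : sim w w')
    {i j : Fin N} (hvi : v ≠ w ++ [i]) (hvj : v ≠ w' ++ [j]) :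
    Martin.mkernel sim m v (w ++ [i]) = Martin.mkernel sim m v (w' ++ [j]) := by
  have hlen_eq : w.length = w'.length := hlen w w' hw
  rcases le_or_gt v.length w.length with hle | hlt
  · rw [Martin.mkernel_append_singleton hsim hm hle,
      Martin.mkernel_append_singleton hsim hm (hle.trans_eq hlen_eq), hlen_eq,
      Martin.densityCl_congr hsim hw, Martin.densityCl_congr hsim hw]
  · rw [Martin.mkernel_eq_zero (by simpa using hlt) hvi,
      Martin.mkernel_eq_zero (by simpa [← hlen_eq] using hlt) hvj]

/-- If the word `v` is none of the children `wi`, `wj`, `w̃i`, `w̃j`, where `w̃ ∼ w`, then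
`k(v,wi) = k(v,wj) = k(v,w̃j) = k(v,w̃i)`. -/
theorem mkernel_children {N : ℕ} (hN : 2 ≤ N)
    (sim : Martin.Word N → Martin.Word N → Prop) (hsim : Equivalence sim)
    (hlen : ∀ v w : Martin.Word N, sim v w → v.length = w.length)
    (m : Fin N → ℝ) (hm : ∀ a, m a ∈ Set.Ioo (0 : ℝ) 1) (hm1 : ∑ a, m a = 1)
    (v w wt : Martin.Word N) (hwt : sim wt w) (i j : Fin N)
    (hvwi : v ≠ w ++ [i]) (hvwj : v ≠ w ++ [j])
    (hvwti : v ≠ wt ++ [i]) (hvwtj : v ≠ wt ++ [j]) :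
    Martin.mkernel sim m v (w ++ [i]) = Martin.mkernel sim m v (w ++ [j]) ∧
      Martin.mkernel sim m v (w ++ [j]) = Martin.mkernel sim m v (wt ++ [j]) ∧
      Martin.mkernel sim m v (wt ++ [j]) = Martin.mkernel sim m v (wt ++ [i]) := by
  have hm0 (a : Fin N) : m a ≠ 0 := (hm a).1.ne'
  exact ⟨mkernel_children_general hsim hlen hm0 (hsim.refl w) hvwi hvwj,
    mkernel_children_general hsim hlen hm0 (hsim.symm hwt) hvwj hvwtj,
    mkernel_children_general hsim hlen hm0 (hsim.refl wt) hvwtj hvwti⟩
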